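/- Fix an even integer n = 2m ≥ 4, and let S be the n×n matrix with S_{i,n+1−i} = (−1)^i for 1 ≤ i ≤ n and all other entries 0. There exists t₀ ∈ ℝ such that for every t ∈ ℤ divisible by (n−1)! and every s ∈ ℤ with |t| > t₀ and |s| > 2, the matrices a(t) and b(s) have integer entries and lie in Sp(n,ℤ) = {g ∈ GL(n,ℤ) : gᵀ·S·g = S}, and the subgroup of Sp(n,ℤ) they generate has infinite index in Sp(n,ℤ) (hence is a thin subgroup, being also Zariski-dense). -/

import Mathlib

/-!
The subgroup `H = ⟨a(t), b(s)⟩` plays ping-pong on `ℤⁿ`. If the sup norm of `v ≠ 0` is attained at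
the last coordinate, then for `|t|` large the first coordinate of `a(t)v` is its largest one and
exceeds the sup norm of `v`, because the corner entry `t^{n-1}/(n-1)!` of `a(t)` outweighs all the
others, which are `O(t^{n-2})` (`aMatZ_pushes`). If it is attained at the first coordinate, then
for `|s| ≥ 3` the last coordinate of `b(s)v` is the largest one and exceeds the sup norm of `v`
(`transvection_pushes`). Since `a(t)^k = a(kt)` and `b(s)^k = b(ks)`, the same holds for all
nontrivial powers, so a nonempty reduced word strictly increases the norm of `e_n` if its last
letter is a power of `a(t)`, and that of `e_1` if it is a power of `b(s)`. Therefore an element of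
`H` fixing both `e_1` and `e_n` is trivial (`eq_one_of_fixes`).

For `n ≥ 4` the stabilizer of `e_1` and `e_n` in `Sp(n, ℤ)` is infinite: it contains the
transvections `1 + k E_{n-1,2}`. As it meets `H` trivially, it embeds in the coset space
`Sp(n, ℤ) / H`.
-/

open Matrix

/-- The `n × n` complex matrix `a(t) = exp(t x)` with `x = ∑_{i=1}^{n-1} E_{i,i+1}`:
its `(i,j)` entry is `t^{j-i}/(j-i)!` for `i ≤ j` and `0` otherwise. -/
noncomputable def aMat (n : ℕ) (t : ℂ) : Matrix (Fin n) (Fin n) ℂ :=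
  Matrix.of fun i j =>
    if (i : ℕ) ≤ (j : ℕ) then t ^ ((j : ℕ) - (i : ℕ)) / (((j : ℕ) - (i : ℕ)).factorial : ℂ)
    else 0

/-- The `n × n` complex matrix `b(s) = 1ₙ + s E_{n,1}` (in 0-based indexing the extra
entry `s` is in position `(n-1, 0)`). -/
def bMat (n : ℕ) (s : ℂ) : Matrix (Fin n) (Fin n) ℂ :=
  Matrix.of fun i j =>
    (if i = j then 1 else 0) + (if (i : ℕ) = n - 1 ∧ (j : ℕ) = 0 then s else 0)

/-- The `n × n` integer antidiagonal matrix `S` with `S_{i,n+1-i} = (-1)^i` (1-based);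
in 0-based indexing the `(i, j)` entry with `i + j = n - 1` is `(-1)^{i+1}`. -/
def SMatZ (n : ℕ) : Matrix (Fin n) (Fin n) ℤ :=
  Matrix.of fun i j => if (i : ℕ) + (j : ℕ) = n - 1 then (-1 : ℤ) ^ ((i : ℕ) + 1) else 0

/-- `Sp(n, ℤ) = {g ∈ GL(n, ℤ) : gᵀ S g = S}`, the integral symplectic group of the form
`S`, as a subgroup of `GL(n, ℤ)`. -/
def SpZ (n : ℕ) : Subgroup (GL (Fin n) ℤ) where
  carrier := {g | (g : Matrix (Fin n) (Fin n) ℤ)ᵀ * SMatZ n * g = SMatZ n}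
  one_mem' := by simp
  mul_mem' := by
    intro a b ha hb
    simp only [Set.mem_setOf_eq, Units.val_mul, Matrix.transpose_mul] at *
    calc (b : Matrix (Fin n) (Fin n) ℤ)ᵀ * (a : Matrix (Fin n) (Fin n) ℤ)ᵀ * SMatZ n *
          ((a : Matrix (Fin n) (Fin n) ℤ) * b)
        = (b : Matrix (Fin n) (Fin n) ℤ)ᵀ *
            ((a : Matrix (Fin n) (Fin n) ℤ)ᵀ * SMatZ n * a) * b := by
          simp only [mul_assoc]
      _ = SMatZ n := by rw [ha]; exact hb
  inv_mem' := by
    intro g hg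
    simp only [Set.mem_setOf_eq] at *
    have h1 : (g : Matrix (Fin n) (Fin n) ℤ) *
        ((g⁻¹ : GL (Fin n) ℤ) : Matrix (Fin n) (Fin n) ℤ) = 1 := by
      rw [← Units.val_mul, mul_inv_cancel, Units.val_one]
    have h2 : ((g⁻¹ : GL (Fin n) ℤ) : Matrix (Fin n) (Fin n) ℤ)ᵀ *
        (g : Matrix (Fin n) (Fin n) ℤ)ᵀ = 1 := by
      rw [← Matrix.transpose_mul, h1, Matrix.transpose_one]
    calc ((g⁻¹ : GL (Fin n) ℤ) : Matrix (Fin n) (Fin n) ℤ)ᵀ * SMatZ n *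
          ((g⁻¹ : GL (Fin n) ℤ) : Matrix (Fin n) (Fin n) ℤ)
        = ((g⁻¹ : GL (Fin n) ℤ) : Matrix (Fin n) (Fin n) ℤ)ᵀ *
            ((g : Matrix (Fin n) (Fin n) ℤ)ᵀ * SMatZ n * (g : Matrix (Fin n) (Fin n) ℤ)) *
            ((g⁻¹ : GL (Fin n) ℤ) : Matrix (Fin n) (Fin n) ℤ) := by rw [hg]
      _ = (((g⁻¹ : GL (Fin n) ℤ) : Matrix (Fin n) (Fin n) ℤ)ᵀ *
            (g : Matrix (Fin n) (Fin n) ℤ)ᵀ) * SMatZ n *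
            ((g : Matrix (Fin n) (Fin n) ℤ) *
              ((g⁻¹ : GL (Fin n) ℤ) : Matrix (Fin n) (Fin n) ℤ)) := by
          simp only [mul_assoc]
      _ = SMatZ n := by rw [h1, h2, one_mul, mul_one]

/-! ### Integral models of `a(t)` and of the transvections -/

/-- The integral model of `a(t)`. The division is exact when `(n-1)!` divides `t`. -/
def aMatZ (n : ℕ) (t : ℤ) : Matrix (Fin n) (Fin n) ℤ :=
  Matrix.of fun i j =>
    if (i : ℕ) ≤ (j : ℕ) then t ^ ((j : ℕ) - (i : ℕ)) / (((j : ℕ) - (i : ℕ)).factorial : ℤ)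
    else 0

lemma factorial_dvd_pow {n : ℕ} {t : ℤ} (ht : ((n - 1).factorial : ℤ) ∣ t) {k : ℕ}
    (hk : k ≤ n - 1) : (k.factorial : ℤ) ∣ t ^ k := by
  rcases Nat.eq_zero_or_pos k with rfl | h
  · simp
  · exact ((Int.natCast_dvd_natCast.2 (Nat.factorial_dvd_factorial hk)).trans ht).trans
      (dvd_pow_self t h.ne')

lemma aMatZ_mul_factorial {n : ℕ} {t : ℤ} (ht : ((n - 1).factorial : ℤ) ∣ t) {i j : Fin n}
    (hij : (i : ℕ) ≤ j) :
    aMatZ n t i j * (((j : ℕ) - (i : ℕ)).factorial : ℤ) = t ^ ((j : ℕ) - (i : ℕ)) := by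
  simp only [aMatZ, of_apply, if_pos hij]
  exact Int.ediv_mul_cancel (factorial_dvd_pow ht (by omega))

lemma aMatZ_map {n : ℕ} {t : ℤ} (ht : ((n - 1).factorial : ℤ) ∣ t) :
    (aMatZ n t).map (Int.cast : ℤ → ℂ) = aMat n (t : ℂ) := by
  ext i j
  by_cases hij : (i : ℕ) ≤ j
  · have h := aMatZ_mul_factorial ht hij
    simp only [map_apply, aMat, of_apply, if_pos hij]
    rw [eq_div_iff (by exact_mod_cast Nat.factorial_ne_zero _)]
    exact_mod_cast h
  · simp only [map_apply, aMat, aMatZ, of_apply, if_neg hij, Int.cast_zero]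

lemma aMat_zero (n : ℕ) : aMat n 0 = 1 := by
  ext i j
  simp only [aMat, of_apply, one_apply]
  by_cases h : i = j
  · simp [h]
  · have h' : (i : ℕ) ≠ j := fun e => h (Fin.ext e)
    by_cases hij : (i : ℕ) ≤ j
    · rw [if_pos hij, if_neg h, zero_pow (by omega), zero_div]
    · rw [if_neg hij, if_neg h]

/-- `t ↦ a(t)` is a one-parameter group; entrywise this is the binomial theorem. -/
lemma aMat_add (n : ℕ) (t u : ℂ) : aMat n (t + u) = aMat n t * aMat n u := by
  ext i j
  rw [mul_apply]
  set F : ℕ → ℂ := fun l =>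
    (if (i : ℕ) ≤ l then t ^ (l - (i : ℕ)) / ((l - (i : ℕ)).factorial : ℂ) else 0) *
    (if l ≤ (j : ℕ) then u ^ ((j : ℕ) - l) / (((j : ℕ) - l).factorial : ℂ) else 0) with hF
  have h1 : ∑ l : Fin n, aMat n t i l * aMat n u l j = ∑ l ∈ Finset.range n, F l := by
    rw [← Fin.sum_univ_eq_sum_range]
    rfl
  have h2 : ∑ l ∈ Finset.range n, F l = ∑ l ∈ Finset.Ico (i : ℕ) (j + 1), F l := by
    symm
    apply Finset.sum_subset
    · intro l hl
      simp only [Finset.mem_Ico, Finset.mem_range] at *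
      omega
    · intro l _ hl
      simp only [Finset.mem_Ico, not_and_or, not_le, not_lt] at hl
      rcases hl with hl | hl
      · simp [hF, not_le.2 hl]
      · have : ¬ l ≤ (j : ℕ) := by omega
        simp [hF, this]
  rw [h1, h2, Finset.sum_Ico_eq_sum_range]
  by_cases hij : (i : ℕ) ≤ j
  · simp only [aMat, of_apply, if_pos hij]
    rw [add_pow, Finset.sum_div, show (j : ℕ) + 1 - i = j - i + 1 by omega]
    refine Finset.sum_congr rfl fun k hk => ?_
    rw [Finset.mem_range] at hk
    have hk' : k ≤ (j : ℕ) - i := by omega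
    rw [Nat.cast_choose ℂ hk']
    simp only [hF]
    rw [if_pos (by omega), if_pos (by omega), show (i : ℕ) + k - i = k by omega,
      show (j : ℕ) - (i + k) = j - i - k by omega]
    have e1 : (((j : ℕ) - i).factorial : ℂ) ≠ 0 := by exact_mod_cast Nat.factorial_ne_zero _
    have e2 : (k.factorial : ℂ) ≠ 0 := by exact_mod_cast Nat.factorial_ne_zero _
    have e3 : (((j : ℕ) - i - k).factorial : ℂ) ≠ 0 := by
      exact_mod_cast Nat.factorial_ne_zero _
    field_simp
  · rw [show (j : ℕ) + 1 - i = 0 by omega]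
    simp only [aMat, of_apply, if_neg hij, Finset.range_zero, Finset.sum_empty]

lemma map_intCast_injective (n : ℕ) :
    Function.Injective fun M : Matrix (Fin n) (Fin n) ℤ => M.map (Int.cast : ℤ → ℂ) :=
  Matrix.map_injective Int.cast_injective

lemma aMatZ_zero (n : ℕ) : aMatZ n 0 = 1 := by
  apply map_intCast_injective n
  change (aMatZ n 0).map (Int.cast : ℤ → ℂ) = (1 : Matrix (Fin n) (Fin n) ℤ).map Int.cast
  rw [aMatZ_map (dvd_zero _), Int.cast_zero, aMat_zero, Matrix.map_one _ Int.cast_zero Int.cast_one]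

lemma aMatZ_add {n : ℕ} {t u : ℤ} (ht : ((n - 1).factorial : ℤ) ∣ t)
    (hu : ((n - 1).factorial : ℤ) ∣ u) : aMatZ n (t + u) = aMatZ n t * aMatZ n u := by
  apply map_intCast_injective n
  change (aMatZ n (t + u)).map (Int.cast : ℤ → ℂ) =
    (aMatZ n t * aMatZ n u).map (Int.castRingHom ℂ)
  rw [Matrix.map_mul, aMatZ_map (dvd_add ht hu), Int.cast_add, aMat_add, ← aMatZ_map ht,
    ← aMatZ_map hu]
  rfl

lemma SMatZ_apply {n : ℕ} (i j : Fin n) :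
    SMatZ n i j = if i = Fin.rev j then (-1 : ℤ) ^ ((i : ℕ) + 1) else 0 := by
  simp only [SMatZ, of_apply]
  congr 1
  simp only [Fin.ext_iff, Fin.val_rev, eq_iff_iff]
  omega

lemma SMatZ_apply' {n : ℕ} (i j : Fin n) :
    SMatZ n i j = if j = Fin.rev i then (-1 : ℤ) ^ ((i : ℕ) + 1) else 0 := by
  rw [SMatZ_apply]
  congr 1
  rw [eq_iff_iff, eq_comm, Fin.rev_eq_iff]

/-- `S a(t) = a(-t)ᵀ S`, i.e. the generator `x` of `a` lies in the Lie algebra of the form `S`. -/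
lemma SMatZ_mul_aMatZ {n : ℕ} {t : ℤ} (ht : ((n - 1).factorial : ℤ) ∣ t) :
    SMatZ n * aMatZ n t = (aMatZ n (-t))ᵀ * SMatZ n := by
  ext i j
  rw [mul_apply, mul_apply]
  simp only [SMatZ_apply' i, SMatZ_apply _ j, ite_mul, zero_mul, mul_ite, mul_zero,
    Finset.sum_ite_eq', Finset.mem_univ, if_true, transpose_apply]
  by_cases hij : n - 1 ≤ (i : ℕ) + j
  · have h1 : ((Fin.rev i : Fin n) : ℕ) ≤ j := by rw [Fin.val_rev]; omega
    have h2 : ((Fin.rev j : Fin n) : ℕ) ≤ i := by rw [Fin.val_rev]; omega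
    have e1 := aMatZ_mul_factorial ht h1
    have e2 := aMatZ_mul_factorial (dvd_neg.2 ht) h2
    have d : (i : ℕ) - (Fin.rev j : Fin n) = (j : ℕ) - (Fin.rev i : Fin n) := by
      simp only [Fin.val_rev]; omega
    rw [d] at e2
    have hne : ((((j : ℕ) - (Fin.rev i : Fin n)).factorial : ℕ) : ℤ) ≠ 0 := by
      exact_mod_cast Nat.factorial_ne_zero _
    apply mul_right_cancel₀ hne
    rw [mul_assoc, e1, mul_right_comm, e2, neg_pow t]
    have : (-1 : ℤ) ^ ((j : ℕ) - (Fin.rev i : Fin n)) * (-1) ^ (((Fin.rev j : Fin n) : ℕ) + 1)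
        = (-1) ^ ((i : ℕ) + 1) := by
      rw [← pow_add]
      congr 1
      simp only [Fin.val_rev]
      omega
    rw [← this]
    ring
  · have h1 : ¬ ((Fin.rev i : Fin n) : ℕ) ≤ j := by rw [Fin.val_rev]; omega
    have h2 : ¬ ((Fin.rev j : Fin n) : ℕ) ≤ i := by rw [Fin.val_rev]; omega
    simp only [aMatZ, of_apply, if_neg h1, if_neg h2, mul_zero, zero_mul]

lemma aMatZ_symplectic {n : ℕ} {t : ℤ} (ht : ((n - 1).factorial : ℤ) ∣ t) :
    (aMatZ n t)ᵀ * SMatZ n * aMatZ n t = SMatZ n := by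
  rw [mul_assoc, SMatZ_mul_aMatZ ht, ← mul_assoc, ← transpose_mul,
    ← aMatZ_add (dvd_neg.2 ht) ht, neg_add_cancel, aMatZ_zero, transpose_one, one_mul]

/-- The transvection `1 + c E_{p,q}` with `p + q = n - 1`, `p ≠ q` preserves `S`; evenness of `n`
makes `S` skew on the pair `{p, q}`. -/
lemma transvection_symplectic {n : ℕ} (heven : Even n) {p q : Fin n} (hpq : p ≠ q)
    (hq : q = Fin.rev p) (c : ℤ) :
    (transvection p q c)ᵀ * SMatZ n * transvection p q c = SMatZ n := by
  have hp : p = Fin.rev q := by rw [hq, Fin.rev_rev]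
  have h1 : SMatZ n * single p q c = single q q ((-1) ^ ((q : ℕ) + 1) * c) := by
    ext i j
    by_cases hj : j = q
    · subst hj
      rw [mul_single_apply_same, SMatZ_apply, single_apply, ← hq]
      by_cases hi : i = j
      · subst hi; simp
      · simp [hi, Ne.symm hi]
    · rw [mul_single_apply_of_ne _ _ _ _ _ hj, single_apply]
      simp [Ne.symm hj]
  have h2 : (single p q c)ᵀ * SMatZ n = single q q (c * (-1) ^ ((p : ℕ) + 1)) := by
    rw [transpose_single]
    ext i j
    by_cases hi : i = q
    · subst hi
      rw [single_mul_apply_same, SMatZ_apply', single_apply, ← hq]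
      by_cases hj : j = i
      · subst hj; simp
      · simp [hj, Ne.symm hj]
    · rw [single_mul_apply_of_ne _ _ _ _ _ hi, single_apply]
      simp [Ne.symm hi]
  have h3 : single q q (c * (-1 : ℤ) ^ ((p : ℕ) + 1)) * single p q c = 0 :=
    single_mul_single_of_ne _ _ _ _ hpq.symm _
  have sgn : (-1 : ℤ) ^ ((q : ℕ) + 1) + (-1) ^ ((p : ℕ) + 1) = 0 := by
    obtain ⟨m, hm⟩ := heven
    have hqv : (q : ℕ) + p + 1 = m + m := by
      rw [hq, Fin.val_rev]; omega
    have hprod : (-1 : ℤ) ^ ((q : ℕ) + 1) * (-1) ^ ((p : ℕ) + 1) = -1 := by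
      rw [← pow_add, show (q : ℕ) + 1 + (p + 1) = m + m + 1 by omega, pow_succ,
        Even.neg_one_pow ⟨m, rfl⟩, one_mul]
    rcases neg_one_pow_eq_or ℤ ((q : ℕ) + 1) with h | h <;> rw [h] at hprod ⊢ <;> linarith
  unfold transvection
  rw [transpose_add, transpose_one, add_mul, one_mul, h2, mul_add, mul_one, add_mul, h1, h3,
    add_zero, add_assoc, ← single_add,
    show c * (-1 : ℤ) ^ ((p : ℕ) + 1) + (-1) ^ ((q : ℕ) + 1) * c = 0 by linear_combination c * sgn,
    single_zero, add_zero]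

/-! ### One-parameter subgroups of `Sp(n, ℤ)` -/

/-- The matrix of an element of `Sp(n, ℤ)`. -/
def toMat (n : ℕ) : SpZ n →* Matrix (Fin n) (Fin n) ℤ :=
  (Units.coeHom _).comp (SpZ n).subtype

lemma toMat_injective (n : ℕ) : Function.Injective (toMat n) := fun _ _ h =>
  Subtype.ext (Units.ext h)

/-- A one-parameter group of integral matrices preserving `S`, as a homomorphism from `ℤ`
(written multiplicatively) to `Sp(n, ℤ)`. -/
def spHom (n : ℕ) (φ : ℤ → Matrix (Fin n) (Fin n) ℤ) (h0 : φ 0 = 1)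
    (hadd : ∀ x y, φ (x + y) = φ x * φ y) (hS : ∀ x, (φ x)ᵀ * SMatZ n * φ x = SMatZ n) :
    Multiplicative ℤ →* SpZ n :=
  MonoidHom.mk'
    (fun x => ⟨⟨φ x.toAdd, φ (-x.toAdd), by rw [← hadd, add_neg_cancel, h0],
      by rw [← hadd, neg_add_cancel, h0]⟩, hS _⟩)
    (fun x y => Subtype.ext (Units.ext (hadd _ _)))

lemma toMat_spHom {n : ℕ} {φ : ℤ → Matrix (Fin n) (Fin n) ℤ} (h0 hadd hS)
    (x : Multiplicative ℤ) : toMat n (spHom n φ h0 hadd hS x) = φ x.toAdd := rfl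

/-- `k ↦ a(kt)`. -/
def aHom {n : ℕ} {t : ℤ} (ht : ((n - 1).factorial : ℤ) ∣ t) : Multiplicative ℤ →* SpZ n :=
  spHom n (fun k => aMatZ n (k * t)) (by simp [aMatZ_zero])
    (fun x y => by rw [add_mul, aMatZ_add (ht.mul_left x) (ht.mul_left y)])
    (fun x => aMatZ_symplectic (ht.mul_left x))

/-- `k ↦ 1 + ks E_{p,q}`. -/
def transHom {n : ℕ} (heven : Even n) {p q : Fin n} (hpq : p ≠ q) (hq : q = Fin.rev p) (s : ℤ) :
    Multiplicative ℤ →* SpZ n :=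
  spHom n (fun k => transvection p q (k * s)) (by simp)
    (fun x y => by rw [add_mul, transvection_mul_transvection_same _ _ hpq])
    (fun x => transvection_symplectic heven hpq hq _)

/-! ### Ping-pong with norm growth -/

/-- The nonzero vector `v` attains its sup norm at the coordinate `p`. -/
def Dominant {n : ℕ} (p : Fin n) (v : Fin n → ℤ) : Prop :=
  0 < |v p| ∧ ∀ j, |v j| ≤ |v p|

lemma dominant_single {n : ℕ} (p : Fin n) : Dominant p (Pi.single p (1 : ℤ)) := by
  refine ⟨by simp, fun j => ?_⟩
  by_cases h : j = p
  · rw [h]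
  · simp [Pi.single_eq_of_ne h]

/-- `g` sends the vectors dominated by the coordinate `p` to vectors dominated by the coordinate
`q`, and strictly increases their sup norm. -/
def Pushes {n : ℕ} (p q : Fin n) (g : SpZ n) : Prop :=
  ∀ v, Dominant p v → Dominant q (toMat n g *ᵥ v) ∧ |v p| < |(toMat n g *ᵥ v) q|

lemma Pushes.mul {n : ℕ} {p q r : Fin n} {g h : SpZ n} (hg : Pushes q r g) (hh : Pushes p q h) :
    Pushes p r (g * h) := by
  intro v hv
  obtain ⟨h1, h2⟩ := hh v hv
  obtain ⟨h3, h4⟩ := hg _ h1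
  rw [map_mul, ← mulVec_mulVec]
  exact ⟨h3, h2.trans h4⟩

/-- If all nontrivial elements of two cyclic groups push (one from `c true` to `c false`, the other
back), then so does every nonempty reduced word, from the coordinate fed to its last letter to the
one produced by its first letter. -/
lemma pushes_word {n : ℕ} (f : Bool → Multiplicative ℤ →* SpZ n) (c : Bool → Fin n)
    (hf : ∀ i x, x ≠ 1 → Pushes (c i) (c !i) (f i x)) {i j : Bool}
    (w : Monoid.CoprodI.NeWord (fun _ : Bool => Multiplicative ℤ) i j) :
    Pushes (c j) (c !i) (Monoid.CoprodI.lift f w.prod) := by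
  induction w with
  | singleton x hx => simpa using hf _ x hx
  | @append i j k l w₁ hne w₂ h1 h2 =>
    have hk : (!k) = j := by cases j <;> cases k <;> simp_all
    rw [hk] at h2
    simpa using h1.mul h2

/-- An element of the ping-pong group fixing both basis vectors `e_{c true}`, `e_{c false}` is
trivial: a nonempty reduced word strictly increases the norm of the one fed to its last letter. -/
lemma eq_one_of_fixes {n : ℕ} (f : Bool → Multiplicative ℤ →* SpZ n) (c : Bool → Fin n)
    (hf : ∀ i x, x ≠ 1 → Pushes (c i) (c !i) (f i x))
    {g : SpZ n} (hg : g ∈ (Monoid.CoprodI.lift f).range)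
    (hfix : ∀ i, toMat n g *ᵥ Pi.single (c i) 1 = Pi.single (c i) 1) : g = 1 := by
  classical
  obtain ⟨w, rfl⟩ := hg
  by_contra hne
  have hw : Monoid.CoprodI.Word.equiv w ≠ Monoid.CoprodI.Word.empty := by
    intro h
    apply hne
    have : w = 1 := by
      apply Monoid.CoprodI.Word.equiv.injective
      rw [h]
      rfl
    rw [this, map_one]
  obtain ⟨i, j, w', hw'⟩ := Monoid.CoprodI.NeWord.of_word _ hw
  have hprod : w'.prod = w := by
    change w'.toWord.prod = w
    rw [hw']
    exact Monoid.CoprodI.Word.equiv.symm_apply_apply w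
  have hd := dominant_single (c j)
  have h := (pushes_word f c hf w' _ hd).2
  rw [hprod, hfix j] at h
  exact absurd (hd.2 _) (not_le.2 h)

/-- For `|s| ≥ 3` the transvection `1 + s E_{p,q}` pushes from `q` to `p`. -/
lemma transvection_pushes {n : ℕ} {p q : Fin n} {s : ℤ} (hs : 2 < |s|)
    {g : SpZ n} (hg : toMat n g = transvection p q s) : Pushes q p g := by
  intro v hv
  have hp : (toMat n g *ᵥ v) p = v p + s * v q := by
    rw [hg]; simp [transvection, add_mulVec, single_mulVec]
  have ho : ∀ j, j ≠ p → (toMat n g *ᵥ v) j = v j := by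
    intro j hj
    rw [hg]; simp [transvection, add_mulVec, single_mulVec, Function.update_of_ne hj]
  have key : |v q| < |v p + s * v q| := by
    have h1 : |s * v q| ≤ |v p + s * v q| + |v p| := by
      calc |s * v q| = |(v p + s * v q) - v p| := by congr 1; ring
        _ ≤ _ := abs_sub _ _
    rw [abs_mul] at h1
    have h2 := hv.2 p
    nlinarith [hv.1]
  rw [hp]
  refine ⟨⟨?_, fun j => ?_⟩, key⟩
  · rw [hp]; exact hv.1.trans key
  · by_cases hj : j = p
    · rw [hj]
    · rw [hp, ho j hj]
      exact (hv.2 j).trans key.le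

/-- For large `|t|` the matrix `a(t)` pushes from the last coordinate to the first one, since its
corner entry `t^{n-1}/(n-1)!` outweighs all other entries, which are `O(t^{n-2})`. -/
lemma aMatZ_pushes {n : ℕ} (hn : 2 ≤ n) {p q : Fin n} (hp : (p : ℕ) = n - 1) (hq : (q : ℕ) = 0)
    {t : ℤ} (ht : ((n - 1).factorial : ℤ) ∣ t) (hbig : 2 * (n : ℤ) * (n - 1).factorial < |t|)
    {g : SpZ n} (hg : toMat n g = aMatZ n t) : Pushes p q g := by
  intro v hv
  have hf1 : (1 : ℤ) ≤ (n - 1).factorial := by exact_mod_cast Nat.factorial_pos _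
  have hn' : (2 : ℤ) ≤ n := by exact_mod_cast hn
  have ht1 : 1 ≤ |t| := by nlinarith
  set X : ℤ := |t| ^ (n - 2) with hX
  have hX1 : 1 ≤ X := one_le_pow₀ ht1
  have hsmall : ∀ i j : Fin n, (i ≠ q ∨ j ≠ p) → |aMatZ n t i j| ≤ X := by
    intro i j hij
    by_cases h : (i : ℕ) ≤ j
    · have e := aMatZ_mul_factorial ht h
      have hd : (j : ℕ) - i ≤ n - 2 := by
        rcases hij with h' | h'
        · have : (i : ℕ) ≠ q := fun e => h' (Fin.ext e)
          omega
        · have : (j : ℕ) ≠ p := fun e => h' (Fin.ext e)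
          omega
      have hfac : (1 : ℤ) ≤ (((j : ℕ) - i).factorial : ℕ) := by
        exact_mod_cast Nat.factorial_pos _
      calc |aMatZ n t i j| ≤ |aMatZ n t i j| * (((j : ℕ) - i).factorial : ℕ) :=
            le_mul_of_one_le_right (abs_nonneg _) hfac
        _ = |t| ^ ((j : ℕ) - i) := by
            rw [← abs_pow, ← e, abs_mul, Nat.abs_cast]
        _ ≤ X := pow_le_pow_right₀ ht1 hd
    · simp only [aMatZ, of_apply, if_neg h, abs_zero]
      omega
  have hcorner : 2 * (n : ℤ) * X < |aMatZ n t q p| := by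
    have e := aMatZ_mul_factorial ht (i := q) (j := p) (by omega)
    rw [hp, hq, Nat.sub_zero] at e
    have e' : |aMatZ n t q p| * ((n - 1).factorial : ℤ) = |t| * X := by
      rw [hX, ← pow_succ', show n - 2 + 1 = n - 1 by omega, ← abs_pow, ← e, abs_mul, Nat.abs_cast]
    have h1 : 2 * (n : ℤ) * (n - 1).factorial * X < |t| * X :=
      mul_lt_mul_of_pos_right hbig (by omega)
    by_contra hcon
    nlinarith [not_lt.1 hcon]
  have hM := hv.1
  set M : ℤ := |v p| with hMdef
  have hsum : ∀ (i : Fin n) (s : Finset (Fin n)), (∀ j ∈ s, i ≠ q ∨ j ≠ p) →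
      |∑ j ∈ s, aMatZ n t i j * v j| ≤ n * (X * M) := by
    intro i s hs
    calc |∑ j ∈ s, aMatZ n t i j * v j| ≤ ∑ j ∈ s, |aMatZ n t i j * v j| :=
          Finset.abs_sum_le_sum_abs _ _
      _ ≤ ∑ j ∈ s, X * M := by
          refine Finset.sum_le_sum fun j hj => ?_
          rw [abs_mul]
          exact mul_le_mul (hsmall i j (hs j hj)) (hv.2 j) (abs_nonneg _) (by omega)
      _ = (s.card : ℤ) * (X * M) := by rw [Finset.sum_const, nsmul_eq_mul]
      _ ≤ n * (X * M) := by
          refine mul_le_mul_of_nonneg_right ?_ (by positivity)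
          exact_mod_cast (Finset.card_le_univ s).trans (by simp)
  have hother : ∀ i, i ≠ q → |(toMat n g *ᵥ v) i| ≤ n * (X * M) := by
    intro i hi
    rw [hg]
    exact hsum i Finset.univ fun _ _ => Or.inl hi
  have hfirst : n * (X * M) < |(toMat n g *ᵥ v) q| := by
    have hrest := hsum q (Finset.univ.erase p) fun j hj => Or.inr (Finset.ne_of_mem_erase hj)
    have hsplit : (toMat n g *ᵥ v) q =
        aMatZ n t q p * v p + ∑ j ∈ Finset.univ.erase p, aMatZ n t q j * v j := by
      rw [hg]
      exact (Finset.add_sum_erase _ _ (Finset.mem_univ p)).symm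
    have h1 : |aMatZ n t q p * v p| ≤ |(toMat n g *ᵥ v) q| +
        |∑ j ∈ Finset.univ.erase p, aMatZ n t q j * v j| := by
      calc |aMatZ n t q p * v p| = |(toMat n g *ᵥ v) q -
            ∑ j ∈ Finset.univ.erase p, aMatZ n t q j * v j| := by
              rw [hsplit]; congr 1; ring
        _ ≤ _ := abs_sub _ _
    rw [abs_mul, ← hMdef] at h1
    have h2 : 2 * (n : ℤ) * X * M < |aMatZ n t q p| * M := mul_lt_mul_of_pos_right hcorner hM
    linarith
  have hgrow : M ≤ n * (X * M) := by
    have : M ≤ X * M := le_mul_of_one_le_left hM.le hX1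
    nlinarith
  refine ⟨⟨by omega, fun j => ?_⟩, by omega⟩
  by_cases hj : j = q
  · rw [hj]
  · exact (hother j hj).trans hfirst.le

lemma infinite_quotient {G : Type*} [Group G] (H : Subgroup G) (γ : Multiplicative ℤ →* G)
    (h : ∀ x, γ x ∈ H → x = 1) : Infinite (G ⧸ H) := by
  refine Infinite.of_injective (fun x : Multiplicative ℤ => (γ x : G ⧸ H)) fun x y hxy => ?_
  have hmem := QuotientGroup.eq.1 hxy
  rw [← map_inv, ← map_mul] at hmem
  exact inv_mul_eq_one.1 (h _ hmem)

/-- for even `n = 2m ≥ 4` and `S` the antidiagonal skew-symmetric form,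
there exists `t₀ ∈ ℝ` such that for all integers `t, s` with `(n-1)! ∣ t`, `|t| > t₀` and
`|s| > 2`, the matrices `a(t)` and `b(s)` have integer entries and lie in
`Sp(n, ℤ) = {g ∈ GL(n, ℤ) : gᵀ S g = S}` — i.e. they are (the complexifications of)
elements `A, B` of `Sp(n, ℤ)` — and the subgroup of `Sp(n, ℤ)` generated by `A` and `B`
has infinite index in `Sp(n, ℤ)` (infinitely many left cosets). -/
theorem stmt17 (n : ℕ) (hn : 4 ≤ n) (heven : Even n) :
    ∃ t₀ : ℝ, ∀ t s : ℤ, ((n - 1).factorial : ℤ) ∣ t →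
      t₀ < |(t : ℝ)| → 2 < |(s : ℝ)| →
      ∃ A B : SpZ n,
        ((A : GL (Fin n) ℤ) : Matrix (Fin n) (Fin n) ℤ).map (Int.cast : ℤ → ℂ) =
            aMat n (t : ℂ) ∧
        ((B : GL (Fin n) ℤ) : Matrix (Fin n) (Fin n) ℤ).map (Int.cast : ℤ → ℂ) =
            bMat n (s : ℂ) ∧
        Infinite (SpZ n ⧸ Subgroup.closure {A, B}) := by
  refine ⟨2 * n * (n - 1).factorial, fun t s ht htbig hs => ?_⟩
  have htbig' : 2 * (n : ℤ) * (n - 1).factorial < |t| := by exact_mod_cast htbig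
  have hs' : 2 < |s| := by exact_mod_cast hs
  let e0 : Fin n := ⟨0, by omega⟩
  let eN : Fin n := ⟨n - 1, by omega⟩
  let m1 : Fin n := ⟨1, by omega⟩
  let m2 : Fin n := ⟨n - 2, by omega⟩
  have hN0 : eN ≠ e0 := by simp only [eN, e0, ne_eq, Fin.mk.injEq]; omega
  have hm : m2 ≠ m1 := by simp only [m1, m2, ne_eq, Fin.mk.injEq]; omega
  have hrev : e0 = Fin.rev eN := by apply Fin.ext; simp only [e0, eN, Fin.val_rev]; omega
  have hrevm : m1 = Fin.rev m2 := by apply Fin.ext; simp only [m1, m2, Fin.val_rev]; omega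
  let α := aHom (n := n) ht
  let β := transHom heven hN0 hrev s
  -- The transvections `1 + k E_{n-1,2}` (1-based) fix `e_1` and `e_n`; this needs `n ≥ 4`.
  let γ := transHom heven hm hrevm 1
  let f : Bool → Multiplicative ℤ →* SpZ n := fun b => if b then α else β
  let c : Bool → Fin n := fun b => if b then eN else e0
  have habs : ∀ (x : Multiplicative ℤ) (u : ℤ), x ≠ 1 → |u| ≤ |x.toAdd * u| := by
    intro x u hx
    rw [abs_mul]
    exact le_mul_of_one_le_left (abs_nonneg _) (Int.one_le_abs fun h => hx (toAdd_eq_zero.1 h))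
  have hf : ∀ i x, x ≠ 1 → Pushes (c i) (c !i) (f i x) := by
    intro i x hx
    cases i
    · exact transvection_pushes (hs'.trans_le (habs x s hx)) rfl
    · exact aMatZ_pushes (by omega) rfl rfl (ht.mul_left _) (htbig'.trans_le (habs x t hx)) rfl
  refine ⟨α (Multiplicative.ofAdd 1), β (Multiplicative.ofAdd 1), ?_, ?_, ?_⟩
  · change (aMatZ n (1 * t)).map (Int.cast : ℤ → ℂ) = _
    rw [one_mul, aMatZ_map ht]
  · change (transvection eN e0 (1 * s)).map (Int.cast : ℤ → ℂ) = _
    ext i j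
    have hcond : (eN = i ∧ e0 = j) ↔ ((i : ℕ) = n - 1 ∧ (j : ℕ) = 0) := by
      simp only [eN, e0, Fin.ext_iff]
      omega
    simp only [map_apply, transvection, Matrix.add_apply, one_apply, single_apply, bMat, of_apply,
      one_mul, hcond]
    split_ifs <;> simp
  · have hle : Subgroup.closure {α (Multiplicative.ofAdd 1), β (Multiplicative.ofAdd 1)} ≤
        (Monoid.CoprodI.lift f).range := by
      rw [Subgroup.closure_le]
      rintro _ (rfl | rfl)
      · exact ⟨Monoid.CoprodI.of (i := true) (Multiplicative.ofAdd 1), by simp [f]⟩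
      · exact ⟨Monoid.CoprodI.of (i := false) (Multiplicative.ofAdd 1), by simp [f]⟩
    refine infinite_quotient _ γ fun x hx => ?_
    have hγ : toMat n (γ x) = transvection m2 m1 (x.toAdd * 1) := rfl
    have hone : γ x = 1 := by
      refine eq_one_of_fixes f c hf (hle hx) fun i => ?_
      have hci : m1 ≠ c i := by
        cases i <;> simp only [c, m1, eN, e0, ne_eq, if_true, Bool.false_eq_true, if_false,
          Fin.mk.injEq] <;> omega
      rw [hγ]
      rw [transvection, add_mulVec, one_mulVec, single_mulVec, Pi.single_eq_of_ne hci, mul_zero,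
        Function.update_eq_self_iff.2 (by simp), add_zero]
    have h1 := congrArg (fun M => M m2 m1) (hγ.symm.trans (by rw [hone, map_one]))
    simpa [transvection, one_apply_ne hm] using h1
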